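/- arXiv:2109.05768 — 3 statements merged into one kernel-verified Lean document; each statement's English description precedes it below -/
import Mathlib

section
/- An inner product ⟨·,·⟩ on Sym(n) is invariant under the group of signed permutation matrices (matrices εP_σ where ε is diagonal with entries in {−1,+1} and P_σ is a permutation matrix; invariance meaning ⟨UXUᵀ, UYUᵀ⟩ = ⟨X,Y⟩ for every signed permutation matrix U) if and only if there exist real numbers α, β, γ with α > 0, γ > β and γ + (n−1)β > 0 such that for all X ∈ Sym(n): ⟨X,X⟩ = γ·Σ_i X_{ii}² + α·Σ_{i≠j} X_{ij}² + β·Σ_{i≠j} X_{ii} X_{jj}. -/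
open Matrix Finset

/-!
Write `S i j = (E i j + E j i) / 2`. For `i ≠ j`, changing the sign of the `i`-th or of the `j`-th
basis vector maps `S i j` to its negative, and up to scaling `S i j` is the only symmetric matrix
negated by both sign changes. Hence an invariant form `B` satisfies
`B (S i j) X = 2 X i j B (S i j) (S i j)`; in particular `S i j` is orthogonal to all diagonal
matrices. Permutations act transitively on indices and on ordered pairs of distinct indices, so all
that is left of `B` are the three numbers `α = 2 B (S i j) (S i j)`, `β = B (S i i) (S j j)` and
`γ = B (S i i) (S i i)`. Positivity of `B` on `S i j`, `S i i - S j j` and the identity gives the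
three inequalities. The converse is polarization.
-/

section PermInvariant

variable {ι α : Type*}

theorem exists_forall_eq_of_perm_invariant [Nonempty α] {f : ι → α}
    (hf : ∀ (σ : Equiv.Perm ι) i, f (σ i) = f i) : ∃ a, ∀ i, f i = a := by
  classical
  rcases isEmpty_or_nonempty ι with _ | ⟨⟨j⟩⟩
  · exact ⟨Classical.arbitrary α, isEmptyElim⟩
  · exact ⟨f j, fun i ↦ by simpa using (hf (Equiv.swap i j) i).symm⟩

theorem exists_forall_ne_eq_of_perm_invariant {f : ι → ι → α}
    (hf : ∀ (σ : Equiv.Perm ι) i j, f (σ i) (σ j) = f i j) {p : α → Prop} (hne : ∃ a, p a)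
    (hp : ∀ i j, i ≠ j → p (f i j)) : ∃ a, p a ∧ ∀ i j, i ≠ j → f i j = a := by
  rcases subsingleton_or_nontrivial ι with _ | _
  · obtain ⟨a, ha⟩ := hne
    exact ⟨a, ha, fun i j hij ↦ absurd (Subsingleton.elim i j) hij⟩
  · obtain ⟨k, l, hkl⟩ := exists_pair_ne ι
    refine ⟨f k l, hp k l hkl, fun i j hij ↦ ?_⟩
    obtain ⟨σ, rfl, rfl⟩ := MulAction.is_two_pretransitive_iff.mp
      (Equiv.Perm.isMultiplyPretransitive ι 2) hkl hij
    exact hf σ k l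

theorem sum_sum_perm [Fintype ι] [AddCommMonoid α] (σ : Equiv.Perm ι) (f : ι → ι → α) :
    ∑ i, ∑ j, f (σ i) (σ j) = ∑ i, ∑ j, f i j := by
  simp only [Equiv.sum_comp σ (f _), Equiv.sum_comp σ fun i ↦ ∑ j, f i j]

end PermInvariant

/-- The space `Sym(ι)` of symmetric matrices, as a submodule of all square matrices. -/
def symmetricMatrices (ι R : Type*) [Semiring R] : Submodule R (Matrix ι ι R) where
  carrier := {X | X.IsSymm}
  add_mem' := IsSymm.add
  zero_mem' := isSymm_zero
  smul_mem' c _ hX := hX.smul c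

/-- The signed permutation matrix `εP_σ`, where `ε` is the diagonal matrix with entries `e`. The
definition makes sense for any `e`; signed permutation matrices are those with `e i = ±1`. -/
def signedPermMatrix {ι R : Type*} [Fintype ι] [DecidableEq ι] [Semiring R] (e : ι → R)
    (σ : Equiv.Perm ι) : Matrix ι ι R :=
  diagonal e * σ.permMatrix R

namespace symmetricMatrices

variable {ι : Type*}

section Semiring

variable {R : Type*} [Semiring R]

theorem mem_iff {X : Matrix ι ι R} : X ∈ symmetricMatrices ι R ↔ X.IsSymm := Iff.rfl

theorem apply_comm (X : symmetricMatrices ι R) (i j : ι) : X.1 j i = X.1 i j :=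
  (mem_iff.mp X.2).apply i j

end Semiring

section CommRing

variable {R : Type*} [CommRing R] [Fintype ι]

/-- The congruence action `X ↦ U X Uᵀ` of a square matrix on symmetric matrices. -/
def congruence (U : Matrix ι ι R) : symmetricMatrices ι R →ₗ[R] symmetricMatrices ι R where
  toFun X := ⟨U * X.1 * Uᵀ, by
    rw [mem_iff, IsSymm, transpose_mul, transpose_mul, transpose_transpose, (mem_iff.mp X.2).eq,
      Matrix.mul_assoc]⟩
  map_add' X Y := Subtype.ext (by simp [Matrix.mul_add, Matrix.add_mul])
  map_smul' c X := Subtype.ext (by simp)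

variable [DecidableEq ι]

theorem congruence_signedPermMatrix_apply (e : ι → R) (σ : Equiv.Perm ι)
    (X : symmetricMatrices ι R) (i j : ι) :
    (congruence (signedPermMatrix e σ) X).1 i j = e i * e j * X.1 (σ i) (σ j) := by
  have hperm : σ.permMatrix R * X.1 * (σ.permMatrix R)ᵀ = X.1.submatrix σ σ := by
    rw [transpose_permMatrix, PEquiv.toMatrix_toPEquiv_mul, PEquiv.mul_toMatrix_toPEquiv]
    rfl
  have hdiag : signedPermMatrix e σ * X.1 * (signedPermMatrix e σ)ᵀ =
      diagonal e * X.1.submatrix σ σ * diagonal e := by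
    rw [signedPermMatrix, transpose_mul, diagonal_transpose, ← hperm]
    simp only [Matrix.mul_assoc]
  change (signedPermMatrix e σ * X.1 * (signedPermMatrix e σ)ᵀ) i j = _
  rw [hdiag, mul_diagonal, diagonal_mul, submatrix_apply]
  ring

/-- A bilinear form on symmetric matrices is invariant under the group of signed permutation
matrices, acting by congruence. -/
def IsSignedPermInvariant (B : LinearMap.BilinForm R (symmetricMatrices ι R)) : Prop :=
  ∀ e : ι → R, (∀ i, e i = 1 ∨ e i = -1) → ∀ (σ : Equiv.Perm ι) (X Y : symmetricMatrices ι R),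
    B (congruence (signedPermMatrix e σ) X) (congruence (signedPermMatrix e σ) Y) = B X Y

/-- The congruence action of the sign change in the `k`-th coordinate. -/
def signFlip (k : ι) : symmetricMatrices ι R →ₗ[R] symmetricMatrices ι R :=
  congruence (signedPermMatrix (Function.update 1 k (-1)) 1)

theorem signFlip_apply (k : ι) (X : symmetricMatrices ι R) (i j : ι) :
    (signFlip k X).1 i j =
      (if i = k then -1 else 1) * (if j = k then -1 else 1) * X.1 i j := by
  simp [signFlip, congruence_signedPermMatrix_apply, Function.update_apply]

theorem IsSignedPermInvariant.signFlip_signFlip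
    {B : LinearMap.BilinForm R (symmetricMatrices ι R)} (hB : IsSignedPermInvariant B) (k : ι)
    (X Y : symmetricMatrices ι R) : B (signFlip k X) (signFlip k Y) = B X Y :=
  hB _ (fun i ↦ by by_cases h : i = k <;> simp [h]) 1 X Y

/-- The quadratic form `γ Σ_i X_{ii}² + α Σ_{i≠j} X_{ij}² + β Σ_{i≠j} X_{ii} X_{jj}`, with
`(a, b, c) = (α, β, γ)`. -/
def diagOffDiagForm (a b c : R) (X : symmetricMatrices ι R) : R :=
  c * (∑ i, X.1 i i ^ 2) + a * (∑ i, ∑ j, if i = j then 0 else X.1 i j ^ 2)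
    + b * (∑ i, ∑ j, if i = j then 0 else X.1 i i * X.1 j j)

theorem diagOffDiagForm_congruence_signedPermMatrix (a b c : R) {e : ι → R}
    (he : ∀ i, e i = 1 ∨ e i = -1) (σ : Equiv.Perm ι) (X : symmetricMatrices ι R) :
    diagOffDiagForm a b c (congruence (signedPermMatrix e σ) X) = diagOffDiagForm a b c X := by
  have he_sq (i : ι) : e i ^ 2 = 1 := by rcases he i with h | h <;> simp [h]
  have he_mul (i : ι) : e i * e i = 1 := by rw [← sq, he_sq]
  have hsq := sum_sum_perm σ fun i j ↦ if i = j then 0 else X.1 i j ^ 2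
  have hdiag := sum_sum_perm σ fun i j ↦ if i = j then 0 else X.1 i i * X.1 j j
  simp only [EmbeddingLike.apply_eq_iff_eq] at hsq hdiag
  simp only [diagOffDiagForm, congruence_signedPermMatrix_apply, mul_pow, he_sq, he_mul, one_mul,
    hsq, hdiag, Equiv.sum_comp σ fun i ↦ X.1 i i ^ 2]

theorem diagOffDiagForm_one (a b c : R) :
    diagOffDiagForm a b c (⟨1, isSymm_one⟩ : symmetricMatrices ι R) =
      Fintype.card ι * (c + (Fintype.card ι - 1) * b) := by
  have hoff (i j : ι) : (if i = j then 0 else (1 : Matrix ι ι R) i j ^ 2) = 0 := by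
    split_ifs with hij <;> simp [hij]
  have hdiag (i j : ι) : (if i = j then 0 else (1 : R) * 1) = 1 - if i = j then 1 else 0 := by
    split_ifs <;> simp
  simp only [diagOffDiagForm, one_apply_eq, hoff, hdiag, sum_sub_distrib, sum_ite_eq, mem_univ,
    if_true, sum_const, card_univ, nsmul_eq_mul]
  ring

end CommRing

section Field

variable {𝕜 : Type*} [Field 𝕜] [DecidableEq ι]

/-- The symmetrized matrix unit `(E i j + E j i) / 2`, which is `E i i` for `i = j`; in
characteristic two it is the junk value `0`. -/
def symSingle (i j : ι) : symmetricMatrices ι 𝕜 :=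
  ⟨(2⁻¹ : 𝕜) • (single i j 1 + single j i 1), by
    rw [← transpose_single i j]
    exact (isSymm_add_transpose_self _).smul _⟩

theorem symSingle_apply (i j k l : ι) :
    (symSingle i j : symmetricMatrices ι 𝕜).1 k l =
      2⁻¹ * ((if i = k ∧ j = l then 1 else 0) + if j = k ∧ i = l then 1 else 0) := by
  simp [symSingle, single_apply, mul_add]

theorem symSingle_self_apply_of_ne (i : ι) {j k : ι} (hjk : j ≠ k) :
    (symSingle i i : symmetricMatrices ι 𝕜).1 j k = 0 := by
  grind [symSingle_apply]

theorem symSingle_comm (i j : ι) : (symSingle i j : symmetricMatrices ι 𝕜) = symSingle j i :=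
  Subtype.ext (by simp only [symSingle, add_comm])

theorem symSingle_ne_zero [NeZero (2 : 𝕜)] (i j : ι) :
    (symSingle i j : symmetricMatrices ι 𝕜) ≠ 0 := by
  intro h
  have hij : (symSingle i j : symmetricMatrices ι 𝕜).1 i j = 0 := by rw [h]; rfl
  have htwo : (2 : 𝕜) ≠ 0 := two_ne_zero
  grind [symSingle_apply]

theorem symSingle_sub_symSingle_ne_zero [NeZero (2 : 𝕜)] {i j : ι} (hij : i ≠ j) :
    (symSingle i i - symSingle j j : symmetricMatrices ι 𝕜) ≠ 0 := by
  intro h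
  have hii : (symSingle i i - symSingle j j : symmetricMatrices ι 𝕜).1 i i = 0 := by rw [h]; rfl
  have htwo : (2 : 𝕜) ≠ 0 := two_ne_zero
  simp only [AddSubgroupClass.coe_sub, Matrix.sub_apply, symSingle_apply] at hii
  grind

variable [Fintype ι]

theorem congruence_signedPermMatrix_symSingle (e : ι → 𝕜) (σ : Equiv.Perm ι) (i j : ι) :
    congruence (signedPermMatrix e σ) (symSingle (σ i) (σ j)) = (e i * e j) • symSingle i j := by
  ext k l
  simp only [congruence_signedPermMatrix_apply, symSingle_apply, EmbeddingLike.apply_eq_iff_eq,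
    SetLike.val_smul, Matrix.smul_apply, smul_eq_mul]
  grind

theorem signFlip_symSingle_left {i j : ι} (hij : i ≠ j) :
    signFlip i (symSingle i j : symmetricMatrices ι 𝕜) = -symSingle i j := by
  ext k l
  simp only [signFlip_apply, symSingle_apply, NegMemClass.coe_neg, Matrix.neg_apply]
  grind

theorem sub_signFlip_sub_signFlip {i j : ι} (hij : i ≠ j) (X : symmetricMatrices ι 𝕜) :
    (X - signFlip i X) - signFlip j (X - signFlip i X) = (8 * X.1 i j) • symSingle i j := by
  have hcomm := apply_comm X i j
  ext k l
  simp only [map_sub, AddSubgroupClass.coe_sub, Matrix.sub_apply, signFlip_apply, SetLike.val_smul,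
    Matrix.smul_apply, symSingle_apply, smul_eq_mul]
  grind

variable {B : LinearMap.BilinForm 𝕜 (symmetricMatrices ι 𝕜)}

namespace IsSignedPermInvariant

theorem apply_symSingle_perm (hB : IsSignedPermInvariant B) (σ : Equiv.Perm ι) (i j k l : ι) :
    B (symSingle (σ i) (σ j)) (symSingle (σ k) (σ l)) = B (symSingle i j) (symSingle k l) := by
  simpa only [congruence_signedPermMatrix_symSingle, mul_one, one_smul] using
    (hB (fun _ ↦ 1) (by simp) σ (symSingle (σ i) (σ j)) (symSingle (σ k) (σ l))).symm

theorem apply_symSingle_sub_signFlip (hB : IsSignedPermInvariant B) {i j : ι} (hij : i ≠ j)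
    (X : symmetricMatrices ι 𝕜) :
    B (symSingle i j) (X - signFlip i X) = 2 * B (symSingle i j) X := by
  have hflip := hB.signFlip_signFlip i (symSingle i j) X
  rw [signFlip_symSingle_left hij, map_neg, LinearMap.neg_apply] at hflip
  rw [map_sub]
  linear_combination hflip

end IsSignedPermInvariant

variable [NeZero (2 : 𝕜)]

theorem eq_sum_symSingle (X : symmetricMatrices ι 𝕜) :
    X = ∑ i, ∑ j, X.1 i j • symSingle i j := by
  ext k l
  have hcomm := apply_comm X k l
  have htwo : (2 : 𝕜) ≠ 0 := two_ne_zero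
  simp only [AddSubmonoidClass.coe_finsetSum, SetLike.val_smul, Matrix.sum_apply, Matrix.smul_apply,
    symSingle_apply, ite_and, mul_add, mul_ite, mul_one, mul_zero, smul_eq_mul, sum_add_distrib,
    sum_ite_irrel, sum_ite_eq', mem_univ, if_true, sum_const_zero]
  grind

theorem bilinForm_apply_eq_sum (X Y : symmetricMatrices ι 𝕜) :
    B X Y = ∑ i, ∑ j, X.1 i j * B (symSingle i j) Y := by
  conv_lhs => rw [eq_sum_symSingle X]
  simp only [map_sum, map_smul, LinearMap.sum_apply, LinearMap.smul_apply, smul_eq_mul]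

namespace IsSignedPermInvariant

theorem apply_symSingle_of_ne (hB : IsSignedPermInvariant B) {i j : ι} (hij : i ≠ j)
    (X : symmetricMatrices ι 𝕜) :
    B (symSingle i j) X = 2 * B (symSingle i j) (symSingle i j) * X.1 i j := by
  have hleft := hB.apply_symSingle_sub_signFlip hij X
  have hright := hB.apply_symSingle_sub_signFlip hij.symm (X - signFlip i X)
  rw [symSingle_comm j i, sub_signFlip_sub_signFlip hij, map_smul, smul_eq_mul, hleft] at hright
  refine mul_left_cancel₀ (mul_ne_zero two_ne_zero two_ne_zero : (2 * 2 : 𝕜) ≠ 0) ?_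
  linear_combination -hright

theorem apply_symSingle_self (hB : IsSignedPermInvariant B) (hsymm : B.IsSymm) (i : ι)
    (X : symmetricMatrices ι 𝕜) :
    B (symSingle i i) X = ∑ j, B (symSingle i i) (symSingle j j) * X.1 j j := by
  rw [hsymm.eq, bilinForm_apply_eq_sum]
  refine sum_congr rfl fun j _ ↦ ?_
  rw [sum_eq_single_of_mem j (mem_univ j), hsymm.eq, mul_comm]
  intro k _ hkj
  rw [hB.apply_symSingle_of_ne hkj.symm, symSingle_self_apply_of_ne i hkj.symm, mul_zero, mul_zero]

theorem apply_self_eq_diagOffDiagForm (hB : IsSignedPermInvariant B) (hsymm : B.IsSymm)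
    {a b c : 𝕜} (ha : ∀ i j : ι, i ≠ j → 2 * B (symSingle i j) (symSingle i j) = a)
    (hb : ∀ i j : ι, i ≠ j → B (symSingle i i) (symSingle j j) = b)
    (hc : ∀ i : ι, B (symSingle i i) (symSingle i i) = c) (X : symmetricMatrices ι 𝕜) :
    B X X = diagOffDiagForm a b c X := by
  have hcoeff (i j : ι) : B (symSingle i i) (symSingle j j) = if i = j then c else b := by
    split_ifs with hij
    · rw [← hij, hc]
    · exact hb i j hij
  have hdiag (i : ι) : X.1 i i * B (symSingle i i) X =
      c * X.1 i i ^ 2 + ∑ j, b * if i = j then 0 else X.1 i i * X.1 j j := by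
    have hc_sum : c * X.1 i i ^ 2 = ∑ j, if i = j then c * X.1 i i ^ 2 else 0 := by simp
    rw [hB.apply_symSingle_self hsymm, mul_sum, hc_sum, ← sum_add_distrib]
    refine sum_congr rfl fun j _ ↦ ?_
    rw [hcoeff]
    split_ifs with hij
    · rw [← hij]; ring
    · ring
  have hentry (i j : ι) : X.1 i j * B (symSingle i j) X =
      (if i = j then X.1 i i * B (symSingle i i) X else 0) +
        a * if i = j then 0 else X.1 i j ^ 2 := by
    split_ifs with hij
    · rw [← hij]; ring
    · rw [hB.apply_symSingle_of_ne hij, ha i j hij]; ring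
  rw [bilinForm_apply_eq_sum, sum_congr rfl fun i _ ↦ sum_congr rfl fun j _ ↦ hentry i j]
  simp only [sum_add_distrib, sum_ite_eq, mem_univ, if_true, hdiag, diagOffDiagForm, mul_sum]
  ring

end IsSignedPermInvariant

theorem isSignedPermInvariant_of_apply_self_eq (hsymm : B.IsSymm) {a b c : 𝕜}
    (h : ∀ X, B X X = diagOffDiagForm a b c X) : IsSignedPermInvariant B := by
  intro e he σ X Y
  set f : symmetricMatrices ι 𝕜 →ₗ[𝕜] symmetricMatrices ι 𝕜 := congruence (signedPermMatrix e σ)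
  suffices B.comp f f = B from LinearMap.BilinForm.congr_fun this X Y
  refine LinearMap.BilinForm.ext_of_isSymm ⟨fun X Y ↦ hsymm.eq (f X) (f Y)⟩ hsymm fun X ↦ ?_
  rw [LinearMap.BilinForm.comp_apply, h, h, diagOffDiagForm_congruence_signedPermMatrix a b c he]

end Field

section LinearOrderedField

variable {𝕜 : Type*} [Field 𝕜] [LinearOrder 𝕜] [IsStrictOrderedRing 𝕜] [Fintype ι] [DecidableEq ι]
  {B : LinearMap.BilinForm 𝕜 (symmetricMatrices ι 𝕜)}

theorem IsSignedPermInvariant.exists_apply_self_eq (hB : IsSignedPermInvariant B)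
    (hsymm : B.IsSymm) (hpos : ∀ X ≠ 0, 0 < B X X) :
    ∃ a b c : 𝕜, 0 < a ∧ b < c ∧ 0 < c + ((Fintype.card ι : 𝕜) - 1) * b ∧
      ∀ X, B X X = diagOffDiagForm a b c X := by
  obtain ⟨c, hc⟩ := exists_forall_eq_of_perm_invariant
    (f := fun i ↦ B (symSingle i i) (symSingle i i)) fun σ i ↦ hB.apply_symSingle_perm σ i i i i
  obtain ⟨b, hbc, hb⟩ := exists_forall_ne_eq_of_perm_invariant (p := (· < c))
    (f := fun i j ↦ B (symSingle i i) (symSingle j j))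
    (fun σ i j ↦ hB.apply_symSingle_perm σ i i j j) (exists_lt c) fun i j hij ↦ by
      have hdiff := hpos _ (symSingle_sub_symSingle_ne_zero hij)
      simp only [map_sub, LinearMap.sub_apply, hc, hsymm.eq (symSingle j j)] at hdiff
      linarith
  obtain ⟨a, ha_pos, ha⟩ := exists_forall_ne_eq_of_perm_invariant (p := (0 < ·))
    (f := fun i j ↦ 2 * B (symSingle i j) (symSingle i j))
    (fun σ i j ↦ by rw [hB.apply_symSingle_perm]) ⟨1, one_pos⟩
    fun i j _ ↦ mul_pos two_pos (hpos _ (symSingle_ne_zero i j))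
  have hform := hB.apply_self_eq_diagOffDiagForm hsymm ha hb hc
  refine ⟨a, b, c, ha_pos, hbc, ?_, hform⟩
  rcases isEmpty_or_nonempty ι with _ | ⟨⟨i⟩⟩
  · simpa using hbc
  · have hone := hpos ⟨1, isSymm_one⟩ fun h ↦ by
      simpa using congrArg (fun X ↦ X.1 i i) h
    rw [hform, diagOffDiagForm_one] at hone
    exact pos_of_mul_pos_right hone (Nat.cast_nonneg _)

end LinearOrderedField

section BilinFormOfIsSymm

variable {R : Type*} [CommRing R] (f : Matrix ι ι R → Matrix ι ι R → R)
  (h_symm : ∀ X Y, X.IsSymm → Y.IsSymm → f X Y = f Y X)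
  (h_add : ∀ X Y Z, X.IsSymm → Y.IsSymm → Z.IsSymm → f (X + Y) Z = f X Z + f Y Z)
  (h_smul : ∀ (c : R) (X Y : Matrix ι ι R), X.IsSymm → Y.IsSymm → f (c • X) Y = c * f X Y)

/-- The bilinear form on `symmetricMatrices` given by a function of two matrices that is symmetric
and linear on symmetric matrices; its values on other matrices are ignored. -/
def bilinFormOfIsSymm : LinearMap.BilinForm R (symmetricMatrices ι R) :=
  LinearMap.mk₂ R (fun X Y ↦ f X.1 Y.1)
    (fun X Y Z ↦ h_add _ _ _ X.2 Y.2 Z.2)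
    (fun c X Y ↦ h_smul c _ _ X.2 Y.2)
    (fun X Y Z ↦ by
      rw [h_symm _ _ X.2 (Y + Z).2, h_symm _ _ X.2 Y.2, h_symm _ _ X.2 Z.2]
      exact h_add _ _ _ Y.2 Z.2 X.2)
    (fun c X Y ↦ by
      rw [h_symm _ _ X.2 (c • Y).2, h_symm _ _ X.2 Y.2]
      exact h_smul c _ _ Y.2 X.2)

theorem bilinFormOfIsSymm_apply (X Y : symmetricMatrices ι R) :
    bilinFormOfIsSymm f h_symm h_add h_smul X Y = f X.1 Y.1 :=
  rfl

theorem isSignedPermInvariant_bilinFormOfIsSymm_iff [Fintype ι] [DecidableEq ι] :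
    IsSignedPermInvariant (bilinFormOfIsSymm f h_symm h_add h_smul) ↔
      ∀ e : ι → R, (∀ i, e i = 1 ∨ e i = -1) → ∀ (σ : Equiv.Perm ι) (X Y : Matrix ι ι R),
        X.IsSymm → Y.IsSymm → f (signedPermMatrix e σ * X * (signedPermMatrix e σ)ᵀ)
          (signedPermMatrix e σ * Y * (signedPermMatrix e σ)ᵀ) = f X Y :=
  ⟨fun h e he σ X Y hX hY ↦ h e he σ ⟨X, hX⟩ ⟨Y, hY⟩,
    fun h e he σ X Y ↦ h e he σ X Y X.2 Y.2⟩

end BilinFormOfIsSymm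

end symmetricMatrices

open symmetricMatrices in
theorem signed_permutation_invariant_inner_products_general {ι 𝕜 : Type*} [Fintype ι]
    [DecidableEq ι] [Field 𝕜] [LinearOrder 𝕜] [IsStrictOrderedRing 𝕜]
    (B : LinearMap.BilinForm 𝕜 (symmetricMatrices ι 𝕜)) (hsymm : B.IsSymm)
    (hpos : ∀ X ≠ 0, 0 < B X X) :
    IsSignedPermInvariant B ↔
      ∃ a b c : 𝕜, 0 < a ∧ b < c ∧ 0 < c + ((Fintype.card ι : 𝕜) - 1) * b ∧
        ∀ X, B X X = diagOffDiagForm a b c X :=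
  ⟨fun hB ↦ hB.exists_apply_self_eq hsymm hpos,
    fun ⟨_, _, _, _, _, _, h⟩ ↦ isSignedPermInvariant_of_apply_self_eq hsymm h⟩

/-- An inner product on `Sym(n)` is invariant under signed permutation matrices iff
it has the form `⟨X,X⟩ = γ Σ_i X_{ii}² + α Σ_{i≠j} X_{ij}² + β Σ_{i≠j} X_{ii}X_{jj}` with
`α > 0`, `γ > β` and `γ + (n−1)β > 0`. -/
theorem signed_permutation_invariant_inner_products (n : ℕ)
    (ip : Matrix (Fin n) (Fin n) ℝ → Matrix (Fin n) (Fin n) ℝ → ℝ)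
    (h_symm : ∀ X Y, X.IsSymm → Y.IsSymm → ip X Y = ip Y X)
    (h_add : ∀ X Y Z, X.IsSymm → Y.IsSymm → Z.IsSymm → ip (X + Y) Z = ip X Z + ip Y Z)
    (h_smul : ∀ (c : ℝ) (X Y : Matrix (Fin n) (Fin n) ℝ), X.IsSymm → Y.IsSymm →
      ip (c • X) Y = c * ip X Y)
    (h_pos : ∀ X, X.IsSymm → X ≠ 0 → 0 < ip X X) :
    (∀ (e : Fin n → ℝ), (∀ i, e i = 1 ∨ e i = -1) → ∀ σ : Equiv.Perm (Fin n),
      ∀ X Y : Matrix (Fin n) (Fin n) ℝ, X.IsSymm → Y.IsSymm →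
        ip ((Matrix.diagonal e * σ.permMatrix ℝ) * X * (Matrix.diagonal e * σ.permMatrix ℝ)ᵀ)
           ((Matrix.diagonal e * σ.permMatrix ℝ) * Y * (Matrix.diagonal e * σ.permMatrix ℝ)ᵀ)
          = ip X Y) ↔
    (∃ a b c : ℝ, 0 < a ∧ b < c ∧ 0 < c + ((n : ℝ) - 1) * b ∧
      ∀ X : Matrix (Fin n) (Fin n) ℝ, X.IsSymm →
        ip X X = c * (∑ i, X i i ^ 2) + a * (∑ i, ∑ j, if i = j then 0 else X i j ^ 2)
          + b * (∑ i, ∑ j, if i = j then 0 else X i i * X j j)) := by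
  simpa only [symmetricMatrices.isSignedPermInvariant_bilinFormOfIsSymm_iff,
      symmetricMatrices.bilinFormOfIsSymm_apply, symmetricMatrices.diagOffDiagForm,
      signedPermMatrix, symmetricMatrices.mem_iff, Subtype.forall, Fintype.card_fin] using
    signed_permutation_invariant_inner_products_general
      (symmetricMatrices.bilinFormOfIsSymm ip h_symm h_add h_smul)
      ⟨fun X Y ↦ h_symm _ _ X.2 Y.2⟩ fun X hX ↦ h_pos _ X.2 (Subtype.coe_ne_coe.mpr hX)
end

section
/- Let γ, α : (0,∞)ⁿ → (0,∞) and β : (0,∞)ⁿ → ℝ be functions such that: (Compatibility) γ = α + β on the set {d ∈ (0,∞)ⁿ : d₁ = d₂}; (Positivity) for all d ∈ (0,∞)ⁿ, the symmetric matrix S(d) with S_{ii}(d) = γ(d_i, d_{k≠i}) and S_{ij}(d) = β(d_i, d_j, d_{k≠i,j}) for i ≠ j is positive definite; (Symmetry) γ is (1,n−1)-symmetric and α, β are (2,n−2)-symmetric. For a positive diagonal D = diag(d₁,…,d_n) define g_D(X,X) = Σ_i γ(d_i, d_{k≠i}) X_{ii}² + Σ_{i≠j} α(d_i, d_j, d_{k≠i,j})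 X_{ij}² + Σ_{i≠j} β(d_i, d_j, d_{k≠i,j}) X_{ii} X_{jj}. Then setting g_Σ(X,X) := g_D(PᵀXP, PᵀXP) for any eigenvalue decomposition Σ = PDPᵀ with P ∈ O(n) and D positive diagonal is independent of the chosen decomposition, and this defines an O(n)-invariant family of positive definite inner products on Sym(n) indexed by Σ ∈ SPD(n). -/
open Matrix Finset

/-- A vector in `ℝⁿ` is positive if all its entries are. -/
def PosVec {n : ℕ} (d : Fin n → ℝ) : Prop := ∀ i, 0 < d i

/-- The vector `(d_i, d_{k≠i})`: entries of `d` reordered so that `d i` comes first, the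
remaining entries being the `d k` for `k ≠ i` (in some order). -/
def reord1 {n : ℕ} (hn : 2 ≤ n) (d : Fin n → ℝ) (i : Fin n) : Fin n → ℝ :=
  d ∘ (Equiv.swap (⟨0, by omega⟩ : Fin n) i)

/-- A permutation sending `0 ↦ i` and `1 ↦ j` (for `i ≠ j`). -/
def perm2 {n : ℕ} (hn : 2 ≤ n) (i j : Fin n) : Equiv.Perm (Fin n) :=
  Equiv.swap (⟨0, by omega⟩ : Fin n) i *
    Equiv.swap (⟨1, by omega⟩ : Fin n) (Equiv.swap (⟨0, by omega⟩ : Fin n) i j)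

/-- The vector `(d_i, d_j, d_{k≠i,j})`: entries of `d` reordered so that `d i, d j` come first,
the remaining entries being the `d k` for `k ≠ i,j` (in some order). -/
def reord2 {n : ℕ} (hn : 2 ≤ n) (d : Fin n → ℝ) (i j : Fin n) : Fin n → ℝ :=
  d ∘ (perm2 hn i j)

/-- `f` is `(1,n−1)`-symmetric: invariant under all permutations of its last `n−1` variables. -/
def Sym1n {n : ℕ} (hn : 2 ≤ n) (f : (Fin n → ℝ) → ℝ) : Prop :=
  ∀ σ : Equiv.Perm (Fin n), σ ⟨0, by omega⟩ = (⟨0, by omega⟩ : Fin n) →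
    ∀ d : Fin n → ℝ, PosVec d → f (d ∘ σ) = f d

/-- `f` is `(2,n−2)`-symmetric: invariant under all permutations of its first `2` variables and
of its last `n−2` variables. -/
def Sym2n {n : ℕ} (hn : 2 ≤ n) (f : (Fin n → ℝ) → ℝ) : Prop :=
  ∀ σ : Equiv.Perm (Fin n),
    ((σ ⟨0, by omega⟩ = (⟨0, by omega⟩ : Fin n) ∧ σ ⟨1, by omega⟩ = (⟨1, by omega⟩ : Fin n)) ∨
     (σ ⟨0, by omega⟩ = (⟨1, by omega⟩ : Fin n) ∧ σ ⟨1, by omega⟩ = (⟨0, by omega⟩ : Fin n))) →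
    ∀ d : Fin n → ℝ, PosVec d → f (d ∘ σ) = f d

/-- The symmetric matrix `S(d)` with `S_{ii}(d) = γ(d_i, d_{k≠i})` and
`S_{ij}(d) = β(d_i, d_j, d_{k≠i,j})` for `i ≠ j`. -/
def Smat {n : ℕ} (hn : 2 ≤ n) (γ β : (Fin n → ℝ) → ℝ) (d : Fin n → ℝ) :
    Matrix (Fin n) (Fin n) ℝ :=
  Matrix.of fun i j => if i = j then γ (reord1 hn d i) else β (reord2 hn d i j)

/-- The compatibility condition: `γ = α + β` on `{d : d₁ = d₂}`. -/
def CompatCond {n : ℕ} (hn : 2 ≤ n) (γ α β : (Fin n → ℝ) → ℝ) : Prop :=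
  ∀ d : Fin n → ℝ, PosVec d → d ⟨0, by omega⟩ = d ⟨1, by omega⟩ → γ d = α d + β d

/-- The positivity condition: `S(d)` is positive definite for every positive `d`. -/
def PositivityCond {n : ℕ} (hn : 2 ≤ n) (γ β : (Fin n → ℝ) → ℝ) : Prop :=
  ∀ d : Fin n → ℝ, PosVec d → (Smat hn γ β d).PosDef

/-- The bilinear form
`g_D(X,Y) = Σ_i γ(d_i,d_{k≠i}) X_{ii}Y_{ii} + Σ_{i≠j} α(d_i,d_j,d_{k≠i,j}) X_{ij}Y_{ij}
 + Σ_{i≠j} β(d_i,d_j,d_{k≠i,j}) X_{ii}Y_{jj}` at the positive diagonal matrix `D = diag d`. -/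
def gD {n : ℕ} (hn : 2 ≤ n) (γ α β : (Fin n → ℝ) → ℝ) (d : Fin n → ℝ)
    (X Y : Matrix (Fin n) (Fin n) ℝ) : ℝ :=
  (∑ i, γ (reord1 hn d i) * X i i * Y i i) +
  (∑ i, ∑ j, if i = j then 0 else α (reord2 hn d i j) * X i j * Y i j) +
  (∑ i, ∑ j, if i = j then 0 else β (reord2 hn d i j) * X i i * Y j j)

/-- Frobenius norm of a real matrix. -/
noncomputable def frobNorm {n : ℕ} (A : Matrix (Fin n) (Fin n) ℝ) : ℝ :=
  Real.sqrt (∑ i, ∑ j, (A i j) ^ 2)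

/-!
Fix `d` and regard the coefficients as functions of eigenvalues instead of indices: by symmetry,
`α(d_i, d_j, …) = a(d_i, d_j)` and `β(d_i, d_j, …) = b(d_i, d_j)` for `i ≠ j`, with kernels `a`, `b`
that do not change when `d` is permuted. The diagonal values `a(s, s)`, `b(s, s)` are forced when
the eigenvalue `s` is repeated, and compatibility says precisely that then `a(s, s) + b(s, s)` is
the corresponding value of `γ`; for a simple eigenvalue this sum can be prescribed. Hence
`g_D(X, Y) = ∑ a(d_i, d_j) X_ij Y_ij + ∑ b(d_i, d_j) X_ii Y_jj`. Two decompositions of the same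
matrix differ by an orthogonal `U` with `diag(d) U = U diag(δ)`. Such a `U` has nonzero entries only
between equal eigenvalues, so conjugation by `U` commutes with Hadamard multiplication by
`a(d_i, d_j)` and preserves `tr(f(D) X) = ∑ f(d_i) X_ii` for every `f`.
-/

section Permutations

variable {ι κ : Type*}

theorem exists_perm_eq_comp_of_map_univ_val_eq [Fintype ι] {u v : ι → κ}
    (h : univ.val.map u = univ.val.map v) : ∃ σ : Equiv.Perm ι, u = v ∘ σ := by
  classical
  have fiber_equiv (c : κ) : Nonempty ({i // u i = c} ≃ {i // v i = c}) := by
    have hcount := congrArg (Multiset.count c) h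
    rw [Multiset.count_map, Multiset.count_map] at hcount
    rw [← Fintype.card_eq, Fintype.card_subtype, Fintype.card_subtype]
    simp only [eq_comm (a := c)] at hcount
    exact hcount
  exact ⟨Equiv.ofFiberEquiv fun c => (fiber_equiv c).some,
    funext fun i => (Equiv.ofFiberEquiv_map (fun c => (fiber_equiv c).some) i).symm⟩

theorem exists_perm_fixing_of_eq_comp {u v : ι → κ} (s : Finset ι)
    (h : ∃ σ : Equiv.Perm ι, u = v ∘ σ) (hs : ∀ x ∈ s, u x = v x) :
    ∃ σ : Equiv.Perm ι, (∀ x ∈ s, σ x = x) ∧ u = v ∘ σ := by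
  classical
  induction s using Finset.induction_on with
  | empty => simpa using h
  | insert x s hx ih =>
    obtain ⟨σ, hfix, rfl⟩ := ih fun y hy => hs y (mem_insert_of_mem hy)
    have hvx : v (σ x) = v x := hs x (mem_insert_self x s)
    refine ⟨Equiv.swap x (σ x) * σ, fun y hy => ?_, funext fun y => ?_⟩
    · rcases mem_insert.mp hy with rfl | hy
      · simp
      · have hyx : y ≠ x := ne_of_mem_of_not_mem hy hx
        have hyσ : y ≠ σ x := fun e => hyx (σ.injective ((hfix y hy).trans e))
        simp [hfix y hy, Equiv.swap_apply_of_ne_of_ne hyx hyσ]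
    · simp only [Function.comp_apply, Equiv.Perm.mul_apply, Equiv.swap_apply_def]
      split_ifs <;> simp_all

theorem exists_perm_fixing_of_comp_perm (v : ι → κ) (s : Finset ι) {σ τ : Equiv.Perm ι}
    (h : ∀ x ∈ s, v (σ x) = v (τ x)) :
    ∃ ρ : Equiv.Perm ι, (∀ x ∈ s, ρ x = x) ∧ v ∘ σ = (v ∘ τ) ∘ ρ :=
  exists_perm_fixing_of_eq_comp s ⟨τ⁻¹ * σ, funext fun _ => by simp⟩ h

end Permutations

section Conjugation

variable {ι R : Type*} [Fintype ι] [DecidableEq ι] [CommRing R]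

theorem charpoly_conj_eq {P P' : Matrix ι ι R} (hP : P' * P = 1) (A : Matrix ι ι R) :
    (P * A * P').charpoly = A.charpoly := by
  rw [charpoly_mul_comm, ← mul_assoc, hP, one_mul]

theorem exists_perm_of_conj_diagonal_eq [IsDomain R] {P P' Q Q' : Matrix ι ι R} {d δ : ι → R}
    (hP : P' * P = 1) (hQ : Q' * Q = 1) (h : P * diagonal d * P' = Q * diagonal δ * Q') :
    ∃ σ : Equiv.Perm ι, δ = d ∘ σ := by
  have roots_charpoly_diagonal (v : ι → R) : (diagonal v).charpoly.roots = univ.val.map v := by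
    rw [charpoly_diagonal, ← Polynomial.roots_multiset_prod_X_sub_C (univ.val.map v),
      Multiset.map_map]
    rfl
  apply exists_perm_eq_comp_of_map_univ_val_eq
  rw [← roots_charpoly_diagonal, ← roots_charpoly_diagonal, ← charpoly_conj_eq hQ, ← h,
    charpoly_conj_eq hP]

theorem diagonal_intertwines_of_conj_eq {P P' Q Q' : Matrix ι ι R} {d δ : ι → R}
    (hP : P' * P = 1) (hQ : Q' * Q = 1) (h : P * diagonal d * P' = Q * diagonal δ * Q') :
    diagonal d * (P' * Q) = P' * Q * diagonal δ :=
  calc diagonal d * (P' * Q) = P' * P * diagonal d * (P' * Q) := by rw [hP, one_mul]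
    _ = P' * (P * diagonal d * P') * Q := by simp only [mul_assoc]
    _ = P' * Q * diagonal δ * (Q' * Q) := by rw [h]; simp only [mul_assoc]
    _ = P' * Q * diagonal δ := by rw [hQ, mul_one]

theorem eq_of_diagonal_intertwines [IsDomain R] {U : Matrix ι ι R} {d δ : ι → R}
    (hU : diagonal d * U = U * diagonal δ) {k i : ι} (hki : U k i ≠ 0) : d k = δ i := by
  have entry := congrFun₂ hU k i
  rw [diagonal_mul, mul_diagonal, mul_comm] at entry
  exact mul_left_cancel₀ hki entry

/-- The bilinear form `∑ a(d_i, d_j) X_ij Y_ij + ∑ b(d_i, d_j) X_ii Y_jj`, whose coefficients depend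
on the indices only through the entries of `d`. It is the form of `gD` whose invariance under
orthogonal changes of eigenbasis is visible. -/
def kernelForm (a b : R → R → R) (d : ι → R) (X Y : Matrix ι ι R) : R :=
  (∑ i, ∑ j, a (d i) (d j) * X i j * Y i j) + ∑ i, ∑ j, b (d i) (d j) * X i i * Y j j

variable [IsDomain R] {U : Matrix ι ι R} {d δ : ι → R}

theorem hadamard_conj_of_diagonal_intertwines (hU : diagonal d * U = U * diagonal δ)
    (a : R → R → R) (X : Matrix ι ι R) :
    (of fun i j => a (δ i) (δ j)) ⊙ (Uᵀ * X * U) =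
      Uᵀ * ((of fun i j => a (d i) (d j)) ⊙ X) * U := by
  ext i j
  simp only [hadamard_apply, of_apply, mul_apply, transpose_apply, sum_mul, mul_sum]
  refine sum_congr rfl fun l _ => sum_congr rfl fun k _ => ?_
  rcases eq_or_ne (U k i) 0 with hki | hki
  · simp [hki]
  rcases eq_or_ne (U l j) 0 with hlj | hlj
  · simp [hlj]
  rw [eq_of_diagonal_intertwines hU hki, eq_of_diagonal_intertwines hU hlj]
  ring

theorem sum_kernel_mul_mul_conj (hUU : U * Uᵀ = 1) (hU : diagonal d * U = U * diagonal δ)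
    (a : R → R → R) (X Y : Matrix ι ι R) :
    ∑ i, ∑ j, a (δ i) (δ j) * (Uᵀ * X * U) i j * (Uᵀ * Y * U) i j =
      ∑ i, ∑ j, a (d i) (d j) * X i j * Y i j := by
  have eq_trace (v : ι → R) (X Y : Matrix ι ι R) : ∑ i, ∑ j, a (v i) (v j) * X i j * Y i j =
      trace (((of fun i j => a (v i) (v j)) ⊙ X) * Yᵀ) :=
    sum_hadamard_eq ((of fun i j => a (v i) (v j)) ⊙ X) Y
  rw [eq_trace, eq_trace, hadamard_conj_of_diagonal_intertwines hU]
  set M := (of fun i j => a (d i) (d j)) ⊙ X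
  calc trace (Uᵀ * M * U * (Uᵀ * Y * U)ᵀ)
      = trace (Uᵀ * (M * (U * Uᵀ) * Yᵀ * U)) := by
        simp only [transpose_mul, transpose_transpose, mul_assoc]
    _ = trace (M * Yᵀ * (U * Uᵀ)) := by
        rw [hUU, mul_one, trace_mul_comm, mul_assoc, hUU]
    _ = trace (M * Yᵀ) := by rw [hUU, mul_one]

theorem sum_apply_mul_diag_conj (hUU : U * Uᵀ = 1) (hU : diagonal d * U = U * diagonal δ)
    (f : R → R) (X : Matrix ι ι R) :
    ∑ i, f (δ i) * (Uᵀ * X * U) i i = ∑ i, f (d i) * X i i := by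
  have diag_conj (i : ι) : f (δ i) * (Uᵀ * X * U) i i =
      (Uᵀ * ((of fun i _ => f (d i)) ⊙ X) * U) i i :=
    congrFun₂ (hadamard_conj_of_diagonal_intertwines hU (fun s _ => f s) X) i i
  calc ∑ i, f (δ i) * (Uᵀ * X * U) i i
      = trace (Uᵀ * ((of fun i _ => f (d i)) ⊙ X) * U) := sum_congr rfl fun i _ => diag_conj i
    _ = trace ((of fun i _ => f (d i)) ⊙ X) := by rw [trace_mul_cycle, hUU, one_mul]
    _ = ∑ i, f (d i) * X i i := rfl

theorem sum_kernel_mul_diag_mul_diag_conj (hUU : U * Uᵀ = 1)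
    (hU : diagonal d * U = U * diagonal δ) (b : R → R → R) (X Y : Matrix ι ι R) :
    ∑ i, ∑ j, b (δ i) (δ j) * (Uᵀ * X * U) i i * (Uᵀ * Y * U) j j =
      ∑ i, ∑ j, b (d i) (d j) * X i i * Y j j := by
  have factor (v : ι → R) (X Y : Matrix ι ι R) : ∑ i, ∑ j, b (v i) (v j) * X i i * Y j j =
      ∑ i, (∑ j, b (v i) (v j) * Y j j) * X i i := by
    simp only [sum_mul, mul_right_comm]
  rw [factor, factor, ← sum_apply_mul_diag_conj hUU hU (fun s => ∑ j, b s (d j) * Y j j) X]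
  simp only [sum_apply_mul_diag_conj hUU hU]

theorem kernelForm_conj (hUU : U * Uᵀ = 1) (hU : diagonal d * U = U * diagonal δ)
    (a b : R → R → R) (X Y : Matrix ι ι R) :
    kernelForm a b δ (Uᵀ * X * U) (Uᵀ * Y * U) = kernelForm a b d X Y :=
  congrArg₂ (· + ·) (sum_kernel_mul_mul_conj hUU hU a X Y)
    (sum_kernel_mul_diag_mul_diag_conj hUU hU b X Y)

end Conjugation

section Coefficients

variable {n : ℕ} {hn : 2 ≤ n} {γ α β f : (Fin n → ℝ) → ℝ} {d : Fin n → ℝ}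

theorem PosVec.comp (hd : PosVec d) (σ : Fin n → Fin n) : PosVec (d ∘ σ) := fun i => hd (σ i)

theorem Sym1n.apply_comp_eq (hf : Sym1n hn f) (hd : PosVec d) {σ τ : Equiv.Perm (Fin n)}
    (h0 : d (σ ⟨0, by omega⟩) = d (τ ⟨0, by omega⟩)) : f (d ∘ σ) = f (d ∘ τ) := by
  obtain ⟨ρ, hfix, hρ⟩ := exists_perm_fixing_of_comp_perm d {(⟨0, by omega⟩ : Fin n)}
    (σ := σ) (τ := τ) (by simpa using h0)
  rw [hρ, hf ρ (hfix _ (by simp)) _ (hd.comp τ)]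

theorem Sym2n.apply_comp_eq (hf : Sym2n hn f) (hd : PosVec d) {σ τ : Equiv.Perm (Fin n)}
    (h0 : d (σ ⟨0, by omega⟩) = d (τ ⟨0, by omega⟩))
    (h1 : d (σ ⟨1, by omega⟩) = d (τ ⟨1, by omega⟩)) : f (d ∘ σ) = f (d ∘ τ) := by
  obtain ⟨ρ, hfix, hρ⟩ := exists_perm_fixing_of_comp_perm d
    {(⟨0, by omega⟩ : Fin n), ⟨1, by omega⟩} (σ := σ) (τ := τ) (by simpa using ⟨h0, h1⟩)
  rw [hρ, hf ρ (.inl ⟨hfix _ (by simp), hfix _ (by simp)⟩) _ (hd.comp τ)]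

theorem perm2_zero {i j : Fin n} (hij : i ≠ j) : perm2 hn i j ⟨0, by omega⟩ = i := by
  have hne : (⟨0, by omega⟩ : Fin n) ≠ Equiv.swap ⟨0, by omega⟩ i j := by
    rw [ne_comm, Ne, Equiv.swap_apply_eq_iff, Equiv.swap_apply_left]
    exact hij.symm
  rw [perm2, Equiv.Perm.mul_apply, Equiv.swap_apply_of_ne_of_ne (by simp) hne,
    Equiv.swap_apply_left]

theorem perm2_one (i j : Fin n) : perm2 hn i j ⟨1, by omega⟩ = j := by
  simp [perm2]

theorem Sym1n.apply_reord1_comp (hf : Sym1n hn f) (hd : PosVec d) (σ : Equiv.Perm (Fin n))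
    {i k : Fin n} (hik : d (σ i) = d k) : f (reord1 hn (d ∘ σ) i) = f (reord1 hn d k) :=
  hf.apply_comp_eq hd (σ := σ * Equiv.swap _ i) (by simpa using hik)

theorem Sym2n.apply_reord2_comp (hf : Sym2n hn f) (hd : PosVec d) (σ : Equiv.Perm (Fin n))
    {i j k l : Fin n} (hij : i ≠ j) (hkl : k ≠ l) (hik : d (σ i) = d k) (hjl : d (σ j) = d l) :
    f (reord2 hn (d ∘ σ) i j) = f (reord2 hn d k l) :=
  hf.apply_comp_eq hd (σ := σ * perm2 hn i j) (by simpa [perm2_zero hij, perm2_zero hkl])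
    (by simpa [perm2_one])

theorem Sym1n.apply_reord1_eq_apply_reord2 (hf : Sym1n hn f) (hd : PosVec d) {i j : Fin n}
    (hij : i ≠ j) : f (reord1 hn d i) = f (reord2 hn d i j) :=
  hf.apply_comp_eq hd (by simp [perm2_zero hij])

theorem CompatCond.apply_reord1_eq (hcompat : CompatCond hn γ α β) (hγ : Sym1n hn γ)
    (hd : PosVec d) {i j : Fin n} (hij : i ≠ j) (h : d i = d j) :
    γ (reord1 hn d i) = α (reord2 hn d i j) + β (reord2 hn d i j) := by
  rw [hγ.apply_reord1_eq_apply_reord2 hd hij]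
  exact hcompat _ (hd.comp _) (by simpa [reord2, perm2_zero hij, perm2_one] using h)

/-- The kernels `a` and `b` represent the coefficients of `gD hn γ α β d`: these depend on the
indices only through the entries of `d`, and each `γ` coefficient splits as `a + b` on the
diagonal. -/
structure RepresentsCoeffs (hn : 2 ≤ n) (γ α β : (Fin n → ℝ) → ℝ) (a b : ℝ → ℝ → ℝ)
    (d : Fin n → ℝ) : Prop where
  alpha : ∀ i j, i ≠ j → α (reord2 hn d i j) = a (d i) (d j)
  beta : ∀ i j, i ≠ j → β (reord2 hn d i j) = b (d i) (d j)
  gamma : ∀ i, γ (reord1 hn d i) = a (d i) (d i) + b (d i) (d i)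

/-- The function of two eigenvalues whose value at `(d i, d j)` is `f (d_i, d_j, d_{k≠i,j})` for
`i ≠ j`; the value at a pair of reals that does not occur in this way is given by `c`. -/
noncomputable def pairKernel (hn : 2 ≤ n) (f : (Fin n → ℝ) → ℝ) (d : Fin n → ℝ)
    (c : ℝ × ℝ → ℝ) (s t : ℝ) : ℝ :=
  Function.extend (fun p : {p : Fin n × Fin n // p.1 ≠ p.2} => (d p.1.1, d p.1.2))
    (fun p => f (reord2 hn d p.1.1 p.1.2)) c (s, t)

theorem pairKernel_apply (hf : Sym2n hn f) (hd : PosVec d) (c : ℝ × ℝ → ℝ) {i j : Fin n}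
    (hij : i ≠ j) : pairKernel hn f d c (d i) (d j) = f (reord2 hn d i j) := by
  refine Function.FactorsThrough.extend_apply (fun p q hpq => ?_) c
    (⟨(i, j), hij⟩ : {p : Fin n × Fin n // p.1 ≠ p.2})
  obtain ⟨h0, h1⟩ := Prod.mk.inj hpq
  exact hf.apply_reord2_comp hd 1 p.2 q.2 h0 h1

theorem pairKernel_self_of_simple (c : ℝ × ℝ → ℝ) {i : Fin n} (hi : ∀ j, i ≠ j → d i ≠ d j) :
    pairKernel hn f d c (d i) (d i) = c (d i, d i) := by
  refine Function.extend_apply' _ _ _ fun ⟨⟨⟨k, l⟩, hkl⟩, h⟩ => hkl ?_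
  obtain ⟨hk, hl⟩ := Prod.mk.inj h
  have eq_i (j : Fin n) (hj : d j = d i) : j = i := by
    by_contra hne
    exact hi j (Ne.symm hne) hj.symm
  exact (eq_i k hk).trans (eq_i l hl).symm

theorem exists_representsCoeffs (hcompat : CompatCond hn γ α β) (hγ : Sym1n hn γ)
    (hα : Sym2n hn α) (hβ : Sym2n hn β) (hd : PosVec d) :
    ∃ a b, RepresentsCoeffs hn γ α β a b d := by
  let c : ℝ × ℝ → ℝ := fun p => Function.extend d (fun i => γ (reord1 hn d i)) 0 p.1
  have hc (i : Fin n) : c (d i, d i) = γ (reord1 hn d i) :=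
    Function.FactorsThrough.extend_apply (fun _ _ h => hγ.apply_reord1_comp hd 1 h) 0 i
  refine ⟨pairKernel hn α d c, pairKernel hn β d 0,
    fun i j hij => (pairKernel_apply hα hd c hij).symm,
    fun i j hij => (pairKernel_apply hβ hd 0 hij).symm, fun i => ?_⟩
  by_cases hi : ∃ j, i ≠ j ∧ d i = d j
  · obtain ⟨j, hij, hdij⟩ := hi
    have hα_ij := pairKernel_apply hα hd c hij
    have hβ_ij := pairKernel_apply hβ hd 0 hij
    rw [← hdij] at hα_ij hβ_ij
    rw [hα_ij, hβ_ij, hcompat.apply_reord1_eq hγ hd hij hdij]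
  · push Not at hi
    rw [pairKernel_self_of_simple c hi, pairKernel_self_of_simple 0 hi, hc, Pi.zero_apply,
      add_zero]

theorem RepresentsCoeffs.comp_perm {a b : ℝ → ℝ → ℝ} (h : RepresentsCoeffs hn γ α β a b d)
    (hγ : Sym1n hn γ) (hα : Sym2n hn α) (hβ : Sym2n hn β) (hd : PosVec d)
    (σ : Equiv.Perm (Fin n)) : RepresentsCoeffs hn γ α β a b (d ∘ σ) where
  alpha _ _ hij := (hα.apply_reord2_comp hd σ hij (σ.injective.ne hij) rfl rfl).trans
    (h.alpha _ _ (σ.injective.ne hij))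
  beta _ _ hij := (hβ.apply_reord2_comp hd σ hij (σ.injective.ne hij) rfl rfl).trans
    (h.beta _ _ (σ.injective.ne hij))
  gamma i := (hγ.apply_reord1_comp hd σ rfl).trans (h.gamma (σ i))

theorem sum_diag_add_sum_sum_offDiag {ι M : Type*} [Fintype ι] [DecidableEq ι] [AddCommMonoid M]
    (u : ι → M) (v : ι → ι → M) :
    (∑ i, u i) + ∑ i, ∑ j, (if i = j then 0 else v i j) =
      ∑ i, ∑ j, if i = j then u i else v i j := by
  rw [← sum_add_distrib]
  refine sum_congr rfl fun i _ => ?_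
  rw [← Fintype.sum_ite_eq i fun _ => u i, ← sum_add_distrib]
  exact sum_congr rfl fun j _ => by split_ifs <;> simp

theorem RepresentsCoeffs.gD_eq_kernelForm {a b : ℝ → ℝ → ℝ}
    (h : RepresentsCoeffs hn γ α β a b d) (X Y : Matrix (Fin n) (Fin n) ℝ) :
    gD hn γ α β d X Y = kernelForm a b d X Y := by
  rw [gD, kernelForm, sum_diag_add_sum_sum_offDiag]
  simp_rw [← sum_add_distrib]
  refine sum_congr rfl fun i _ => sum_congr rfl fun j _ => ?_
  split_ifs with hij
  · subst hij
    rw [h.gamma]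
    ring
  · rw [h.alpha i j hij, h.beta i j hij]

theorem gD_conj_eq_of_conj_diagonal_eq (hcompat : CompatCond hn γ α β) (hγ : Sym1n hn γ)
    (hα : Sym2n hn α) (hβ : Sym2n hn β) (hd : PosVec d) {δ : Fin n → ℝ}
    {P Q : Matrix (Fin n) (Fin n) ℝ} (hP : P * Pᵀ = 1) (hQ : Q * Qᵀ = 1)
    (h : P * diagonal d * Pᵀ = Q * diagonal δ * Qᵀ) (X Y : Matrix (Fin n) (Fin n) ℝ) :
    gD hn γ α β δ (Qᵀ * X * Q) (Qᵀ * Y * Q) = gD hn γ α β d (Pᵀ * X * P) (Pᵀ * Y * P) := by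
  have hP' : Pᵀ * P = 1 := mul_eq_one_comm.mp hP
  have hQ' : Qᵀ * Q = 1 := mul_eq_one_comm.mp hQ
  obtain ⟨a, b, hab⟩ := exists_representsCoeffs hcompat hγ hα hβ hd
  have hab_δ : RepresentsCoeffs hn γ α β a b δ := by
    obtain ⟨σ, rfl⟩ := exists_perm_of_conj_diagonal_eq hP' hQ' h
    exact hab.comp_perm hγ hα hβ hd σ
  have transition_orthogonal : Pᵀ * Q * (Pᵀ * Q)ᵀ = 1 := by
    rw [transpose_mul, transpose_transpose, mul_assoc, ← mul_assoc Q, hQ, one_mul, hP']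
  have conj_transition (Z : Matrix (Fin n) (Fin n) ℝ) :
      Qᵀ * Z * Q = (Pᵀ * Q)ᵀ * (Pᵀ * Z * P) * (Pᵀ * Q) :=
    calc Qᵀ * Z * Q = Qᵀ * (P * Pᵀ) * Z * (P * Pᵀ) * Q := by simp only [hP, mul_one]
      _ = (Pᵀ * Q)ᵀ * (Pᵀ * Z * P) * (Pᵀ * Q) := by
        simp only [transpose_mul, transpose_transpose, mul_assoc]
  rw [hab.gD_eq_kernelForm, hab_δ.gD_eq_kernelForm, conj_transition X, conj_transition Y,
    kernelForm_conj transition_orthogonal (diagonal_intertwines_of_conj_eq hP' hQ' h)]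

end Coefficients

section HadamardPositivity

variable {ι R : Type*} [Ring R] [LinearOrder R] [IsStrictOrderedRing R] {W X : Matrix ι ι R}

theorem hadamard_hadamard_self_nonneg (hW : ∀ i j, 0 ≤ W i j) (i j : ι) :
    0 ≤ (W ⊙ X ⊙ X) i j := by
  rw [hadamard_assoc]
  exact mul_nonneg (hW i j) (mul_self_nonneg (X i j))

theorem sum_hadamard_hadamard_self_nonneg [Fintype ι] (hW : ∀ i j, 0 ≤ W i j) :
    0 ≤ ∑ i, ∑ j, (W ⊙ X ⊙ X) i j :=
  sum_nonneg fun i _ => sum_nonneg fun j _ => hadamard_hadamard_self_nonneg hW i j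

theorem sum_hadamard_hadamard_self_pos [Fintype ι] (hW : ∀ i j, 0 ≤ W i j)
    (hW' : ∀ i j, i ≠ j → 0 < W i j) (hdiag : X.diag = 0) (hX : X ≠ 0) :
    0 < ∑ i, ∑ j, (W ⊙ X ⊙ X) i j := by
  obtain ⟨i, j, hXij⟩ : ∃ i j, X i j ≠ 0 := by
    by_contra! h
    exact hX (Matrix.ext h)
  have hij : i ≠ j := by
    rintro rfl
    exact hXij (congrFun hdiag i)
  have hpos : 0 < (W ⊙ X ⊙ X) i j := by
    rw [hadamard_assoc]
    exact mul_pos (hW' i j hij) (mul_self_pos.mpr hXij)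
  have hnonneg := hadamard_hadamard_self_nonneg (X := X) hW
  exact sum_pos' (fun k _ => sum_nonneg fun l _ => hnonneg k l)
    ⟨i, mem_univ i, sum_pos' (fun l _ => hnonneg i l) ⟨j, mem_univ j, hpos⟩⟩

end HadamardPositivity

section DiagonalPoint

variable {n : ℕ} {hn : 2 ≤ n} {γ α β : (Fin n → ℝ) → ℝ} {d : Fin n → ℝ}

/-- The matrix of the `α` coefficients of `gD`, with zero diagonal; the counterpart of `Smat` for
the off-diagonal entries. -/
def Amat (hn : 2 ≤ n) (α : (Fin n → ℝ) → ℝ) (d : Fin n → ℝ) : Matrix (Fin n) (Fin n) ℝ :=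
  of fun i j => if i = j then 0 else α (reord2 hn d i j)

theorem gD_eq_sum_hadamard_add_dotProduct (X Y : Matrix (Fin n) (Fin n) ℝ) :
    gD hn γ α β d X Y =
      (∑ i, ∑ j, (Amat hn α d ⊙ X ⊙ Y) i j) + X.diag ⬝ᵥ (Smat hn γ β d *ᵥ Y.diag) := by
  rw [gD, add_right_comm, sum_diag_add_sum_sum_offDiag, add_comm]
  simp only [dotProduct, mulVec, mul_sum, hadamard_apply, Amat, Smat, of_apply, diag_apply]
  congr 1 <;> refine sum_congr rfl fun i _ => sum_congr rfl fun j _ => ?_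
  · split_ifs <;> ring
  · split_ifs with hij
    · subst hij
      ring
    · ring

theorem gD_comm (hS : (Smat hn γ β d).IsSymm) (X Y : Matrix (Fin n) (Fin n) ℝ) :
    gD hn γ α β d X Y = gD hn γ α β d Y X := by
  rw [gD_eq_sum_hadamard_add_dotProduct, gD_eq_sum_hadamard_add_dotProduct, hadamard_assoc,
    hadamard_comm X Y, ← hadamard_assoc, dotProduct_mulVec, ← mulVec_transpose, hS.eq,
    dotProduct_comm]

theorem gD_self_pos (hαpos : ∀ d, PosVec d → 0 < α d) (hS : (Smat hn γ β d).PosDef)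
    (hd : PosVec d) {X : Matrix (Fin n) (Fin n) ℝ} (hX : X ≠ 0) : 0 < gD hn γ α β d X X := by
  have Amat_pos (i j : Fin n) (hij : i ≠ j) : 0 < Amat hn α d i j := by
    rw [Amat, of_apply, if_neg hij]
    exact hαpos _ (hd.comp (perm2 hn i j))
  have Amat_nonneg (i j : Fin n) : 0 ≤ Amat hn α d i j := by
    rcases eq_or_ne i j with rfl | hij
    · simp [Amat]
    · exact (Amat_pos i j hij).le
  rw [gD_eq_sum_hadamard_add_dotProduct]
  rcases eq_or_ne X.diag 0 with hdiag | hdiag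
  · rw [hdiag, zero_dotProduct, add_zero]
    exact sum_hadamard_hadamard_self_pos Amat_nonneg Amat_pos hdiag hX
  · exact add_pos_of_nonneg_of_pos (sum_hadamard_hadamard_self_nonneg Amat_nonneg)
      (hS.dotProduct_mulVec_pos hdiag)

/-- `gD` bundled as a bilinear form on all square matrices. -/
def gDForm (hn : 2 ≤ n) (γ α β : (Fin n → ℝ) → ℝ) (d : Fin n → ℝ) :
    LinearMap.BilinForm ℝ (Matrix (Fin n) (Fin n) ℝ) :=
  LinearMap.mk₂ ℝ (gD hn γ α β d)
    (fun X X' Y => by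
      simp only [gD_eq_sum_hadamard_add_dotProduct, hadamard_add, add_hadamard, Matrix.add_apply,
        sum_add_distrib, diag_add, add_dotProduct]
      ring)
    (fun c X Y => by
      simp only [gD_eq_sum_hadamard_add_dotProduct, hadamard_smul, smul_hadamard, Matrix.smul_apply,
        ← smul_sum, diag_smul, smul_dotProduct, smul_add])
    (fun X Y Y' => by
      simp only [gD_eq_sum_hadamard_add_dotProduct, hadamard_add, Matrix.add_apply,
        sum_add_distrib, diag_add, mulVec_add, dotProduct_add]
      ring)
    (fun c X Y => by
      simp only [gD_eq_sum_hadamard_add_dotProduct, hadamard_smul, Matrix.smul_apply,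
        ← smul_sum, diag_smul, mulVec_smul, dotProduct_smul, smul_add])

end DiagonalPoint

section SpectralDecomposition

variable {ι : Type*} [Fintype ι] [DecidableEq ι] {S : Matrix ι ι ℝ}

theorem eigenvectorUnitary_mul_transpose_self (hS : S.IsHermitian) :
    (hS.eigenvectorUnitary : Matrix ι ι ℝ) * (hS.eigenvectorUnitary : Matrix ι ι ℝ)ᵀ = 1 := by
  simpa [star_eq_conjTranspose] using Unitary.coe_mul_star_self hS.eigenvectorUnitary

theorem eigenvectorUnitary_mul_diagonal_mul_transpose (hS : S.IsHermitian) :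
    (hS.eigenvectorUnitary : Matrix ι ι ℝ) * diagonal hS.eigenvalues *
      (hS.eigenvectorUnitary : Matrix ι ι ℝ)ᵀ = S := by
  have h := hS.spectral_theorem
  rw [Unitary.conjStarAlgAut_apply, star_eq_conjTranspose,
    conjTranspose_eq_transpose_of_trivial] at h
  exact h.symm

theorem exists_orthogonal_diagonalization (hS : S.PosDef) :
    ∃ (P : Matrix ι ι ℝ) (d : ι → ℝ),
      P * Pᵀ = 1 ∧ (∀ i, 0 < d i) ∧ P * diagonal d * Pᵀ = S :=
  ⟨_, _, eigenvectorUnitary_mul_transpose_self hS.1, hS.eigenvalues_pos,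
    eigenvectorUnitary_mul_diagonal_mul_transpose hS.1⟩

end SpectralDecomposition

section InvariantMetric

variable {n : ℕ} {hn : 2 ≤ n} {γ α β : (Fin n → ℝ) → ℝ} {d : Fin n → ℝ}
  {P : Matrix (Fin n) (Fin n) ℝ}

open Classical in
/-- The bilinear form `g_S`, computed in the eigenbasis of `S` chosen by Mathlib's spectral theorem;
it takes the junk value `0` when `S` is not symmetric. -/
noncomputable def spectralMetric (hn : 2 ≤ n) (γ α β : (Fin n → ℝ) → ℝ)
    (S : Matrix (Fin n) (Fin n) ℝ) : LinearMap.BilinForm ℝ (Matrix (Fin n) (Fin n) ℝ) :=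
  if hS : S.IsHermitian then
    let conj := LinearMap.mulLeftRight ℝ
      ((hS.eigenvectorUnitary : Matrix (Fin n) (Fin n) ℝ)ᵀ, ↑hS.eigenvectorUnitary)
    (gDForm hn γ α β hS.eigenvalues).compl₁₂ conj conj
  else 0

theorem spectralMetric_apply (hcompat : CompatCond hn γ α β) (hγ : Sym1n hn γ)
    (hα : Sym2n hn α) (hβ : Sym2n hn β) (hP : P * Pᵀ = 1) (hd : PosVec d)
    (X Y : Matrix (Fin n) (Fin n) ℝ) :
    spectralMetric hn γ α β (P * diagonal d * Pᵀ) X Y =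
      gD hn γ α β d (Pᵀ * X * P) (Pᵀ * Y * P) := by
  have hS : (P * diagonal d * Pᵀ).IsHermitian := by
    simp [IsHermitian, mul_assoc]
  rw [spectralMetric, dif_pos hS]
  exact gD_conj_eq_of_conj_diagonal_eq hcompat hγ hα hβ hd hP
    (eigenvectorUnitary_mul_transpose_self hS)
    (eigenvectorUnitary_mul_diagonal_mul_transpose hS).symm X Y

theorem spectralMetric_conj (hcompat : CompatCond hn γ α β) (hγ : Sym1n hn γ)
    (hα : Sym2n hn α) (hβ : Sym2n hn β) {R S : Matrix (Fin n) (Fin n) ℝ} (hR : R * Rᵀ = 1)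
    (hS : S.PosDef) (X Y : Matrix (Fin n) (Fin n) ℝ) :
    spectralMetric hn γ α β (R * S * Rᵀ) (R * X * Rᵀ) (R * Y * Rᵀ) =
      spectralMetric hn γ α β S X Y := by
  obtain ⟨P, d, hP, hd, rfl⟩ := exists_orthogonal_diagonalization hS
  have hR' : Rᵀ * R = 1 := mul_eq_one_comm.mp hR
  have hRP : R * P * (R * P)ᵀ = 1 := by
    rw [transpose_mul, mul_assoc, ← mul_assoc P, hP, one_mul, hR]
  have decomposition : R * (P * diagonal d * Pᵀ) * Rᵀ = R * P * diagonal d * (R * P)ᵀ := by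
    simp only [transpose_mul, mul_assoc]
  have conj_conj (Z : Matrix (Fin n) (Fin n) ℝ) :
      (R * P)ᵀ * (R * Z * Rᵀ) * (R * P) = Pᵀ * Z * P :=
    calc (R * P)ᵀ * (R * Z * Rᵀ) * (R * P) = Pᵀ * (Rᵀ * R) * Z * (Rᵀ * R) * P := by
          simp only [transpose_mul, mul_assoc]
      _ = Pᵀ * Z * P := by simp only [hR', mul_one]
  rw [decomposition, spectralMetric_apply hcompat hγ hα hβ hRP hd,
    spectralMetric_apply hcompat hγ hα hβ hP hd, conj_conj, conj_conj]

theorem spectralMetric_isSymm (hcompat : CompatCond hn γ α β) (hpos : PositivityCond hn γ β)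
    (hγ : Sym1n hn γ) (hα : Sym2n hn α) (hβ : Sym2n hn β) {S : Matrix (Fin n) (Fin n) ℝ}
    (hS : S.PosDef) : (spectralMetric hn γ α β S).IsSymm := by
  obtain ⟨P, d, hP, hd, rfl⟩ := exists_orthogonal_diagonalization hS
  refine ⟨fun X Y => ?_⟩
  rw [spectralMetric_apply hcompat hγ hα hβ hP hd, spectralMetric_apply hcompat hγ hα hβ hP hd,
    gD_comm (isHermitian_iff_isSymm.mp (hpos d hd).isHermitian)]

theorem spectralMetric_self_pos (hαpos : ∀ d, PosVec d → 0 < α d)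
    (hcompat : CompatCond hn γ α β) (hpos : PositivityCond hn γ β) (hγ : Sym1n hn γ)
    (hα : Sym2n hn α) (hβ : Sym2n hn β) {S X : Matrix (Fin n) (Fin n) ℝ} (hS : S.PosDef)
    (hX : X ≠ 0) : 0 < spectralMetric hn γ α β S X X := by
  obtain ⟨P, d, hP, hd, rfl⟩ := exists_orthogonal_diagonalization hS
  have hPXP : Pᵀ * X * P ≠ 0 := fun h => hX <|
    calc X = P * Pᵀ * X * (P * Pᵀ) := by rw [hP, one_mul, mul_one]
      _ = P * (Pᵀ * X * P) * Pᵀ := by simp only [mul_assoc]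
      _ = 0 := by rw [h, mul_zero, zero_mul]
  rw [spectralMetric_apply hcompat hγ hα hβ hP hd]
  exact gD_self_pos hαpos (hpos d hd) hd hPXP

end InvariantMetric

theorem o_n_invariant_metric_construction_general {n : ℕ} (hn : 2 ≤ n)
    {γ α β : (Fin n → ℝ) → ℝ} (hαpos : ∀ d, PosVec d → 0 < α d)
    (hcompat : CompatCond hn γ α β) (hposS : PositivityCond hn γ β)
    (hγsym : Sym1n hn γ) (hαsym : Sym2n hn α) (hβsym : Sym2n hn β) :
    ∃ g : Matrix (Fin n) (Fin n) ℝ → LinearMap.BilinForm ℝ (Matrix (Fin n) (Fin n) ℝ),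
      (∀ (P : Matrix (Fin n) (Fin n) ℝ) (d : Fin n → ℝ), P * Pᵀ = 1 → PosVec d → ∀ X Y,
        g (P * diagonal d * Pᵀ) X Y = gD hn γ α β d (Pᵀ * X * P) (Pᵀ * Y * P)) ∧
      (∀ R : Matrix (Fin n) (Fin n) ℝ, R * Rᵀ = 1 → ∀ S : Matrix (Fin n) (Fin n) ℝ, S.PosDef →
        ∀ X Y, g (R * S * Rᵀ) (R * X * Rᵀ) (R * Y * Rᵀ) = g S X Y) ∧
      ∀ S : Matrix (Fin n) (Fin n) ℝ, S.PosDef → (g S).IsSymm ∧ ∀ X, X ≠ 0 → 0 < g S X X :=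
  ⟨spectralMetric hn γ α β,
    fun _ _ hP hd => spectralMetric_apply hcompat hγsym hαsym hβsym hP hd,
    fun _ hR _ hS => spectralMetric_conj hcompat hγsym hαsym hβsym hR hS,
    fun _ hS => ⟨spectralMetric_isSymm hcompat hposS hγsym hαsym hβsym hS,
      fun _ => spectralMetric_self_pos hαpos hcompat hposS hγsym hαsym hβsym hS⟩⟩

/-- Characterization of `O(n)`-invariant metrics on SPD matrices (sufficiency).
Given `γ, α, β` satisfying the compatibility, positivity and symmetry conditions, the value
`g_Σ(X,Y) := g_D(PᵀXP, PᵀYP)` does not depend on the chosen eigenvalue decomposition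
`Σ = P D Pᵀ`, and this defines an `O(n)`-invariant family of positive definite inner products
on `Sym(n)` indexed by `Σ ∈ SPD(n)`. -/
theorem o_n_invariant_metric_construction (n : ℕ) (hn : 2 ≤ n)
    (γ α β : (Fin n → ℝ) → ℝ)
    (hγpos : ∀ d, PosVec d → 0 < γ d) (hαpos : ∀ d, PosVec d → 0 < α d)
    (hcompat : CompatCond hn γ α β) (hposS : PositivityCond hn γ β)
    (hγsym : Sym1n hn γ) (hαsym : Sym2n hn α) (hβsym : Sym2n hn β) :
    (∀ (P Q : Matrix (Fin n) (Fin n) ℝ) (d δ : Fin n → ℝ),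
      P * Pᵀ = 1 → Q * Qᵀ = 1 → PosVec d → PosVec δ →
      P * Matrix.diagonal d * Pᵀ = Q * Matrix.diagonal δ * Qᵀ →
      ∀ X Y : Matrix (Fin n) (Fin n) ℝ, X.IsSymm → Y.IsSymm →
        gD hn γ α β d (Pᵀ * X * P) (Pᵀ * Y * P) = gD hn γ α β δ (Qᵀ * X * Q) (Qᵀ * Y * Q)) ∧
    (∃ g : Matrix (Fin n) (Fin n) ℝ → Matrix (Fin n) (Fin n) ℝ →
        Matrix (Fin n) (Fin n) ℝ → ℝ,
      (∀ (P : Matrix (Fin n) (Fin n) ℝ) (d : Fin n → ℝ), P * Pᵀ = 1 → PosVec d →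
        ∀ X Y : Matrix (Fin n) (Fin n) ℝ, X.IsSymm → Y.IsSymm →
          g (P * Matrix.diagonal d * Pᵀ) X Y = gD hn γ α β d (Pᵀ * X * P) (Pᵀ * Y * P)) ∧
      (∀ R : Matrix (Fin n) (Fin n) ℝ, R * Rᵀ = 1 →
        ∀ Sig : Matrix (Fin n) (Fin n) ℝ, Sig.PosDef →
        ∀ X Y : Matrix (Fin n) (Fin n) ℝ, X.IsSymm → Y.IsSymm →
          g (R * Sig * Rᵀ) (R * X * Rᵀ) (R * Y * Rᵀ) = g Sig X Y) ∧
      (∀ Sig : Matrix (Fin n) (Fin n) ℝ, Sig.PosDef →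
        ∀ X Y, X.IsSymm → Y.IsSymm → g Sig X Y = g Sig Y X) ∧
      (∀ Sig : Matrix (Fin n) (Fin n) ℝ, Sig.PosDef →
        ∀ X Y Z, X.IsSymm → Y.IsSymm → Z.IsSymm →
          g Sig (X + Y) Z = g Sig X Z + g Sig Y Z) ∧
      (∀ Sig : Matrix (Fin n) (Fin n) ℝ, Sig.PosDef →
        ∀ (c : ℝ) (X Y : Matrix (Fin n) (Fin n) ℝ), X.IsSymm → Y.IsSymm →
          g Sig (c • X) Y = c * g Sig X Y) ∧
      (∀ Sig : Matrix (Fin n) (Fin n) ℝ, Sig.PosDef →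
        ∀ X, X.IsSymm → X ≠ 0 → 0 < g Sig X X)) := by
  obtain ⟨g, hg, hinv, hinner⟩ :=
    o_n_invariant_metric_construction_general hn hαpos hcompat hposS hγsym hαsym hβsym
  refine ⟨fun P Q d δ hP hQ hd hδ h X Y _ _ => ?_, fun S X Y => g S X Y,
    fun P d hP hd X Y _ _ => hg P d hP hd X Y, fun R hR S hS X Y _ _ => hinv R hR S hS X Y,
    fun S hS X Y _ _ => (hinner S hS).1.eq X Y, fun S _ X Y Z _ _ _ => by simp,
    fun S _ c X Y _ _ => by simp, fun S hS X _ hX => (hinner S hS).2 X hX⟩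
  rw [← hg P d hP hd, ← hg Q δ hQ hδ, h]
end

section
/- Let Σ, Λ be n×n real symmetric positive semidefinite matrices, and let D = diag(d₁,…,d_n) and Δ = diag(δ₁,…,δ_n) be the diagonal matrices of their eigenvalues ordered increasingly (d₁ ≤ … ≤ d_n, δ₁ ≤ … ≤ δ_n, counted with multiplicity). Then ‖D − Δ‖_F ≤ ‖Σ − Λ‖_F. -/
open Matrix Finset

/-!
This is the Hoffman–Wielandt inequality. Put `W = Uᴴ V`. Unitary invariance of the Frobenius norm
turns `‖U D Uᴴ - V Δ Vᴴ‖²` into `‖D W - W Δ‖² = ∑ i j, ‖d i - δ j‖² ‖W i j‖²`, which is linear in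
the doubly stochastic matrix `‖W i j‖²`. By Birkhoff's theorem such a function is minimized at a
permutation matrix, so some matching of the eigenvalues costs at most `‖U D Uᴴ - V Δ Vᴴ‖²`. For
real eigenvalues the rearrangement inequality says that the monotone matching is the cheapest.
-/

section Permutations

variable {ι R : Type*} [Fintype ι]

theorem sum_mul_permMatrix [DecidableEq ι] [NonAssocSemiring R] (C : Matrix ι ι R)
    (σ : Equiv.Perm ι) : ∑ i, ∑ j, C i j * σ.permMatrix R i j = ∑ i, C i (σ i) := by
  simp [Equiv.Perm.permMatrix, PEquiv.toMatrix_apply]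

theorem exists_perm_sum_apply_le_of_mem_doublyStochastic [DecidableEq ι] [Field R] [LinearOrder R]
    [IsStrictOrderedRing R] (C : Matrix ι ι R) {M : Matrix ι ι R}
    (hM : M ∈ doublyStochastic R ι) :
    ∃ σ : Equiv.Perm ι, ∑ i, C i (σ i) ≤ ∑ i, ∑ j, C i j * M i j := by
  let cost : Matrix ι ι R →ₗ[R] R := ∑ i, ∑ j, C i j • entryLinearMap R R i j
  have cost_apply (N : Matrix ι ι R) : cost N = ∑ i, ∑ j, C i j * N i j := by
    simp [cost, LinearMap.sum_apply]
  have hM_hull : M ∈ convexHull R {σ.permMatrix R | σ : Equiv.Perm ι} := by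
    rwa [← doublyStochastic_eq_convexHull_permMatrix]
  obtain ⟨_, ⟨σ, rfl⟩, hσ⟩ :=
    (cost.concaveOn convex_univ).exists_le_of_mem_convexHull (Set.subset_univ _) hM_hull
  exact ⟨σ, by simpa only [cost_apply, sum_mul_permMatrix] using hσ⟩

theorem sum_sub_sq_le_sum_sub_comp_perm_sq [CommRing R] [LinearOrder R] [IsStrictOrderedRing R]
    {f g : ι → R} (hfg : Monovary f g) (σ : Equiv.Perm ι) :
    ∑ i, (f i - g i) ^ 2 ≤ ∑ i, (f i - g (σ i)) ^ 2 := by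
  have rearrangement : ∑ i, f i * g (σ i) ≤ ∑ i, f i * g i := hfg.sum_mul_comp_perm_le_sum_mul
  have sum_sq_comp : ∑ i, g (σ i) ^ 2 = ∑ i, g i ^ 2 := Equiv.sum_comp σ fun i ↦ g i ^ 2
  simp only [sub_sq, sum_add_distrib, sum_sub_distrib, mul_assoc, ← mul_sum]
  linarith

end Permutations

section Unitary

theorem mul_mul_star_sub_mul_mul_star_of_mem_unitary {R : Type*} [Ring R] [StarRing R] {u v : R}
    (hu : u ∈ unitary R) (hv : v ∈ unitary R) (a b : R) :
    u * a * star u - v * b * star v = u * (a * (star u * v) - star u * v * b) * star v := by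
  calc u * a * star u - v * b * star v
      = u * a * star u * (v * star v) - u * star u * (v * b * star v) := by
        rw [Unitary.mul_star_self_of_mem hu, Unitary.mul_star_self_of_mem hv, mul_one, one_mul]
    _ = u * (a * (star u * v) - star u * v * b) * star v := by noncomm_ring

variable {ι 𝕜 : Type*} [Fintype ι] [DecidableEq ι] [RCLike 𝕜]

theorem sum_norm_sq_row_of_mem_unitaryGroup {W : Matrix ι ι 𝕜} (hW : W ∈ unitaryGroup ι 𝕜)
    (i : ι) : ∑ j, ‖W i j‖ ^ 2 = 1 := by
  have h := congr_fun₂ (mem_unitaryGroup_iff.1 hW) i i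
  simp only [mul_apply, star_apply, RCLike.star_def, RCLike.mul_conj, one_apply_eq] at h
  exact_mod_cast h

theorem of_norm_sq_mem_doublyStochastic_of_mem_unitaryGroup {W : Matrix ι ι 𝕜}
    (hW : W ∈ unitaryGroup ι 𝕜) : (of fun i j ↦ ‖W i j‖ ^ 2) ∈ doublyStochastic ℝ ι := by
  refine mem_doublyStochastic_iff_sum.2
    ⟨fun _ _ ↦ sq_nonneg _, sum_norm_sq_row_of_mem_unitaryGroup hW, fun j ↦ ?_⟩
  simpa using sum_norm_sq_row_of_mem_unitaryGroup (Unitary.star_mem hW) j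

end Unitary

section Frobenius

open scoped Matrix.Norms.Frobenius

variable {l m n ι 𝕜 : Type*} [Fintype l] [Fintype m] [Fintype n] [Fintype ι] [DecidableEq ι]

theorem frobenius_norm_eq_sqrt {α : Type*} [SeminormedAddCommGroup α] (A : Matrix m n α) :
    ‖A‖ = √(∑ i, ∑ j, ‖A i j‖ ^ 2) := by
  simp [frobenius_norm_def, Real.sqrt_eq_rpow]

theorem frobenius_norm_sq_eq_sum {α : Type*} [SeminormedAddCommGroup α] (A : Matrix m n α) :
    ‖A‖ ^ 2 = ∑ i, ∑ j, ‖A i j‖ ^ 2 := by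
  rw [frobenius_norm_eq_sqrt, Real.sq_sqrt (by positivity)]

theorem frobNorm_eq_norm {k : ℕ} (A : Matrix (Fin k) (Fin k) ℝ) : frobNorm A = ‖A‖ := by
  simp [frobNorm, frobenius_norm_eq_sqrt]

theorem frobenius_norm_diagonal_sub_sq {α : Type*} [SeminormedAddCommGroup α] (d δ : ι → α) :
    ‖diagonal d - diagonal δ‖ ^ 2 = ∑ i, ‖d i - δ i‖ ^ 2 := by
  rw [diagonal_sub, frobenius_norm_diagonal, PiLp.norm_sq_eq_of_L2]

theorem frobenius_norm_diagonal_mul_sub_mul_diagonal_sq [NormedField 𝕜] (d δ : ι → 𝕜)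
    (W : Matrix ι ι 𝕜) :
    ‖diagonal d * W - W * diagonal δ‖ ^ 2 = ∑ i, ∑ j, ‖d i - δ j‖ ^ 2 * ‖W i j‖ ^ 2 := by
  simp only [frobenius_norm_sq_eq_sum, Matrix.sub_apply, diagonal_mul, mul_diagonal,
    mul_comm (W _ _), ← sub_mul, norm_mul, mul_pow]

variable [RCLike 𝕜]

theorem frobenius_norm_sq_eq_trace (A : Matrix m n 𝕜) : (‖A‖ ^ 2 : 𝕜) = (Aᴴ * A).trace := by
  rw [← RCLike.ofReal_pow, frobenius_norm_sq_eq_sum, sum_comm]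
  simp [trace, mul_apply, RCLike.conj_mul]

theorem frobenius_norm_mul_of_conjTranspose_mul_self_eq_one [DecidableEq m] {U : Matrix l m 𝕜}
    (hU : Uᴴ * U = 1) (A : Matrix m n 𝕜) : ‖U * A‖ = ‖A‖ := by
  have trace_eq : ((U * A)ᴴ * (U * A)).trace = (Aᴴ * A).trace := by
    rw [conjTranspose_mul, Matrix.mul_assoc, ← Matrix.mul_assoc Uᴴ, hU, Matrix.one_mul]
  rw [← frobenius_norm_sq_eq_trace, ← frobenius_norm_sq_eq_trace] at trace_eq
  exact (sq_eq_sq₀ (norm_nonneg _) (norm_nonneg _)).1 (mod_cast trace_eq)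

theorem frobenius_norm_mul_conjTranspose_of_conjTranspose_mul_self_eq_one [DecidableEq m]
    {V : Matrix l m 𝕜} (hV : Vᴴ * V = 1) (A : Matrix n m 𝕜) : ‖A * Vᴴ‖ = ‖A‖ := by
  rw [← frobenius_norm_conjTranspose, conjTranspose_mul, conjTranspose_conjTranspose,
    frobenius_norm_mul_of_conjTranspose_mul_self_eq_one hV, frobenius_norm_conjTranspose]

variable {U V : Matrix ι ι 𝕜}

theorem frobenius_norm_unitary_conj_sub_unitary_conj (hU : U ∈ unitaryGroup ι 𝕜)
    (hV : V ∈ unitaryGroup ι 𝕜) (A B : Matrix ι ι 𝕜) :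
    ‖U * A * Uᴴ - V * B * Vᴴ‖ = ‖A * (Uᴴ * V) - Uᴴ * V * B‖ := by
  simp only [← star_eq_conjTranspose, mul_mul_star_sub_mul_mul_star_of_mem_unitary hU hV]
  rw [star_eq_conjTranspose V, frobenius_norm_mul_conjTranspose_of_conjTranspose_mul_self_eq_one
    (mem_unitaryGroup_iff'.1 hV), frobenius_norm_mul_of_conjTranspose_mul_self_eq_one
    (mem_unitaryGroup_iff'.1 hU)]

theorem exists_perm_frobenius_norm_diagonal_sub_le (d δ : ι → 𝕜) (hU : U ∈ unitaryGroup ι 𝕜)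
    (hV : V ∈ unitaryGroup ι 𝕜) :
    ∃ σ : Equiv.Perm ι, ‖diagonal d - diagonal (δ ∘ σ)‖ ≤
      ‖U * diagonal d * Uᴴ - V * diagonal δ * Vᴴ‖ := by
  have hW : Uᴴ * V ∈ unitaryGroup ι 𝕜 := mul_mem (Unitary.star_mem hU) hV
  obtain ⟨σ, hσ⟩ := exists_perm_sum_apply_le_of_mem_doublyStochastic
    (of fun i j ↦ ‖d i - δ j‖ ^ 2) (of_norm_sq_mem_doublyStochastic_of_mem_unitaryGroup hW)
  refine ⟨σ, (sq_le_sq₀ (norm_nonneg _) (norm_nonneg _)).1 ?_⟩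
  rw [frobenius_norm_unitary_conj_sub_unitary_conj hU hV,
    frobenius_norm_diagonal_mul_sub_mul_diagonal_sq, frobenius_norm_diagonal_sub_sq]
  exact hσ

theorem frobenius_norm_diagonal_sub_le_of_monovary {d δ : ι → ℝ} (h : Monovary d δ)
    (σ : Equiv.Perm ι) :
    ‖diagonal (fun i ↦ (d i : 𝕜)) - diagonal (fun i ↦ (δ i : 𝕜))‖ ≤
      ‖diagonal (fun i ↦ (d i : 𝕜)) - diagonal (fun i ↦ (δ (σ i) : 𝕜))‖ := by
  refine (sq_le_sq₀ (norm_nonneg _) (norm_nonneg _)).1 ?_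
  simpa only [frobenius_norm_diagonal_sub_sq, ← RCLike.ofReal_sub, RCLike.norm_ofReal, sq_abs]
    using sum_sub_sq_le_sum_sub_comp_perm_sq h σ

theorem ordered_eigenvalues_frobenius_stable_general {d δ : ι → ℝ} (h : Monovary d δ)
    (hU : U ∈ unitaryGroup ι 𝕜) (hV : V ∈ unitaryGroup ι 𝕜) :
    ‖diagonal (fun i ↦ (d i : 𝕜)) - diagonal (fun i ↦ (δ i : 𝕜))‖ ≤
      ‖U * diagonal (fun i ↦ (d i : 𝕜)) * Uᴴ - V * diagonal (fun i ↦ (δ i : 𝕜)) * Vᴴ‖ := by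
  obtain ⟨σ, hσ⟩ := exists_perm_frobenius_norm_diagonal_sub_le
    (fun i ↦ (d i : 𝕜)) (fun i ↦ (δ i : 𝕜)) hU hV
  exact (frobenius_norm_diagonal_sub_le_of_monovary h σ).trans hσ

end Frobenius

/-- If `Σ = P D Pᵀ` and `Λ = Q Δ Qᵀ` are positive semidefinite matrices with
increasingly ordered eigenvalue matrices `D, Δ`, then `‖D − Δ‖_F ≤ ‖Σ − Λ‖_F`. -/
theorem ordered_eigenvalues_frobenius_stable (n : ℕ) (d δ : Fin n → ℝ)
    (hd0 : ∀ i, 0 ≤ d i) (hδ0 : ∀ i, 0 ≤ δ i)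
    (hd : Monotone d) (hδ : Monotone δ)
    (P Q : Matrix (Fin n) (Fin n) ℝ) (hP : P * Pᵀ = 1) (hQ : Q * Qᵀ = 1) :
    frobNorm (Matrix.diagonal d - Matrix.diagonal δ) ≤
      frobNorm (P * Matrix.diagonal d * Pᵀ - Q * Matrix.diagonal δ * Qᵀ) := by
  simpa [frobNorm_eq_norm] using ordered_eigenvalues_frobenius_stable_general (𝕜 := ℝ)
    (hd.monovary hδ) (mem_unitaryGroup_iff.2 hP) (mem_unitaryGroup_iff.2 hQ)
end
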